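/- Let G be a finite group and ψ : R → S a centralizing G-Galois extension with Galois basis (x₁,…,x_m; y₁,…,y_m). Then the Nakayama automorphism ν : S → S associated to the Frobenius system ((xᵢ, yᵢ), tr), given by ν(d) = Σ_{g∈G} Σ_{i=1}^m g(xᵢ d)·yᵢ, leaves ψ(R) pointwise invariant: ν(ψ(r)) = ψ(r) for all r ∈ R. -/

import Mathlib

open scoped TensorProduct

namespace Nuss
noncomputable section

variable {R : Type*} [CommRing R] {S : Type*} [Ring S] [Algebra R S]
variable {G : Type*} [Group G]

/-- The Galois map `Γ : S ⊗[R] S →ₗ[R] Map(G,S)`, `Γ(s ⊗ t)(g) = s⬝g(t)`, for a centralizing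
extension, i.e. an `R`-algebra `S`, with `G` acting by `R`-algebra automorphisms. -/
def gammaAlg (act : G →* (S ≃ₐ[R] S)) : S ⊗[R] S →ₗ[R] (G → S) :=
  TensorProduct.lift <| LinearMap.mk₂ R (fun s t => fun g => s * act g t)
    (fun s s' t => by funext g; simp [add_mul])
    (fun c s t => by funext g; simp [Algebra.smul_mul_assoc])
    (fun s t t' => by funext g; simp [map_add, mul_add])
    (fun c s t => by funext g; simp [map_smul, Algebra.mul_smul_comm])

@[simp] lemma gammaAlg_tmul (act : G →* (S ≃ₐ[R] S)) (s t : S) :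
    gammaAlg act (s ⊗ₜ[R] t) = fun g => s * act g t := rfl

/-- The function `δ_e ∈ Map(G, S)`: `1` at the neutral element, `0` elsewhere. -/
def deltaE' (G S : Type*) [Group G] [Ring S] : G → S :=
  fun g => letI := Classical.decEq G; if g = 1 then 1 else 0

/-- A centralizing `G`-Galois extension: `S` is an `R`-algebra (so that the structure morphism
`ψ = algebraMap R S` lands in the centre of `S`), the finite group `G` acts on `S` by
`R`-algebra automorphisms (equivalently, by ring automorphisms fixing `ψ(R)` pointwise),
`S` is a faithfully flat `R`-module via `ψ`, and the Galois map is bijective. -/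
structure IsCentralizingGaloisExtension (G : Type*) [Group G] [Finite G]
    (R S : Type*) [CommRing R] [Ring S] [Algebra R S] (act : G →* (S ≃ₐ[R] S)) : Prop where
  faithfullyFlat : Module.FaithfullyFlat R S
  bijective : Function.Bijective (gammaAlg act)

/-- A central extension: the structure morphism maps `R` bijectively onto the centre of `S`. -/
def IsCentralExtension (R S : Type*) [CommRing R] [Ring S] [Algebra R S] : Prop :=
  Function.Injective (algebraMap R S) ∧ (algebraMap R S).range = Subring.center S

/-- A separable extension: the multiplication `μ : S ⊗[R] S → S` splits as a morphism of
`S`-bimodules; equivalently there is a Casimir element `η` with `μ(η) = 1`. -/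
def IsSeparableExtension (R S : Type*) [CommRing R] [Ring S] [Algebra R S] : Prop :=
  ∃ η : S ⊗[R] S, (∀ s : S, (s ⊗ₜ[R] (1 : S)) * η = η * ((1 : S) ⊗ₜ[R] s)) ∧
    LinearMap.mul' R S η = 1

/-- A `G`-Galois-Azumaya extension: a central `G`-Galois extension `R → S` such that `S` is
an Azumaya (central separable) `R`-algebra. -/
def IsGaloisAzumayaExtension (G : Type*) [Group G] [Finite G]
    (R S : Type*) [CommRing R] [Ring S] [Algebra R S] (act : G →* (S ≃ₐ[R] S)) : Prop :=
  IsCentralizingGaloisExtension G R S act ∧ IsCentralExtension R S ∧ IsSeparableExtension R S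

end
end Nuss

namespace Nuss
noncomputable section

/-- For a centralizing `G`-Galois extension `ψ : R → S` with Galois basis
`(x₁,…,x_m; y₁,…,y_m)`, the Nakayama automorphism
`ν(d) = Σ_{g∈G} Σ_{i=1}^m g(xᵢ d) ⬝ yᵢ` associated to the Frobenius system `((xᵢ,yᵢ), tr)`
leaves `ψ(R)` pointwise invariant: `ν(ψ(r)) = ψ(r)` for all `r ∈ R`. -/
theorem nakayama_fixes_base
    {R : Type*} [CommRing R] {S : Type*} [Ring S] [Algebra R S]
    {G : Type*} [Group G] [Fintype G]
    (act : G →* (S ≃ₐ[R] S))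
    (hGal : IsCentralizingGaloisExtension G R S act)
    {m : ℕ} (x y : Fin m → S)
    (hbasis : gammaAlg act (∑ i, (x i) ⊗ₜ[R] (y i)) = deltaE' G S) :
    ∀ r : R, (∑ g : G, ∑ i, act g (x i * algebraMap R S r) * y i) = algebraMap R S r := by
  intro r
  classical
  have key : ∀ g : G, ∑ i, act g (x i) * y i = if g = 1 then 1 else 0 := by
    intro g
    have h := congrFun hbasis g⁻¹
    have h1 : ∑ i, x i * act g⁻¹ (y i) = if g = 1 then 1 else 0 := by
      simpa [map_sum, gammaAlg_tmul, Finset.sum_apply, deltaE'] using h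
    have h2 := congrArg (act g) h1
    have h3 : ∀ z, act g (act g⁻¹ z) = z := by
      intro z
      rw [← AlgEquiv.mul_apply, ← map_mul]
      simp
    rw [map_sum] at h2
    simp only [map_mul, h3] at h2
    rw [h2]
    split_ifs <;> simp
  have step : ∀ g : G, ∑ i, act g (x i * algebraMap R S r) * y i
      = algebraMap R S r * ∑ i, act g (x i) * y i := by
    intro g
    rw [Finset.mul_sum]
    refine Finset.sum_congr rfl fun i _ => ?_
    rw [map_mul, AlgEquiv.commutes, ← Algebra.commutes, mul_assoc]
  simp only [step, key]
  simp

end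
end Nuss
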